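/- Let k be a field of characteristic 0 and n = 5. The k-vector space R_{(1,1,1,1,1)} is zero, while the k-vector space R_{(2,2,2,2,2)} of SL₂(k)-invariant multihomogeneous polynomials of multidegree (2,2,2,2,2) has dimension 6. (The degree 2 invariants give the embedding of the GIT quotient of five points on ℙ¹, the quintic del Pezzo surface, into ℙ⁵.) -/

import Mathlib

/-!
Invariance under `diag(c, c⁻¹)` forces every monomial of an invariant to contain as many `x`'s as
`y`'s, so there are no invariants when the total degree is odd.

For multidegree `(2,2,2,2,2)`, evaluate an invariant at configurations of five vectors taken from
the base points `P₀ = (1,0)`, `P₁ = (0,1)`, `P₂ = (1,1)`. Moving three points in general position to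
the base points and interpolating the binary quadratic forms in the other two vectors shows that the
nine values at `(P₀, P₁, P₂, Pᵢ, Pⱼ)` determine the invariant. Those with `i = j` vanish, because a
configuration in which three of the five points coincide is unstable. The other six can be
prescribed independently: the configuration is then a 3-colouring of the five points, a graph
monomial is nonzero at it exactly when the colouring is proper, and each of the six colourings is
the only one that is proper for a suitable pentagon.

Geometrically, this is the quintic del Pezzo surface as the blow-up of `ℙ¹ × ℙ¹` at three points of
the diagonal, anticanonically embedded by the forms of bidegree `(2,2)` through these points.
-/

open MvPolynomial

/-- The polynomial ring `A = k[x_1, y_1, …, x_n, y_n]`: variable `(i, 0)` is `x_i`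
and `(i, 1)` is `y_i`. -/
abbrev PtRing (k : Type) [CommRing k] (n : ℕ) := MvPolynomial (Fin n × Fin 2) k

/-- The bracket `[ab] = x_a y_b − x_b y_a`. -/
noncomputable def bracket (k : Type) [CommRing k] (n : ℕ) (a b : Fin n) : PtRing k n :=
  X (a, 0) * X (b, 1) - X (b, 0) * X (a, 1)

/-- The graph monomial `m_Γ = ∏_{(a,b) ∈ Γ} [ab]` of a directed graph `Γ`,
viewed as a multiset of directed edges. -/
noncomputable def graphMonomial (k : Type) [CommRing k] (n : ℕ)
    (Γ : Multiset (Fin n × Fin n)) : PtRing k n :=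
  (Γ.map fun e => bracket k n e.1 e.2).prod

/-- The `k`-algebra endomorphism of `A` induced by a `2×2` matrix `g = ((p,q),(r,s))`:
`x_i ↦ p·x_i + r·y_i` and `y_i ↦ q·x_i + s·y_i`. -/
noncomputable def subst (k : Type) [CommRing k] (n : ℕ) (g : Matrix (Fin 2) (Fin 2) k) :
    PtRing k n →ₐ[k] PtRing k n :=
  aeval fun p =>
    if p.2 = 0 then C (g 0 0) * X (p.1, 0) + C (g 1 0) * X (p.1, 1)
    else C (g 0 1) * X (p.1, 0) + C (g 1 1) * X (p.1, 1)

/-- The valence vector of a directed graph: the `i`-th entry is the number of edges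
(with multiplicity) having `i` as an endpoint. -/
def valence (n : ℕ) (Γ : Multiset (Fin n × Fin n)) : Fin n → ℕ :=
  fun i => (Γ.map Prod.fst).count i + (Γ.map Prod.snd).count i

/-- `R_v`: the space of `SL₂(k)`-invariant multihomogeneous polynomials of multidegree `v`. -/
noncomputable def Rv (k : Type) [CommRing k] (n : ℕ) (v : Fin n → ℕ) :
    Submodule k (PtRing k n) :=
  (⨅ g : Matrix.SpecialLinearGroup (Fin 2) k,
      LinearMap.ker ((subst k n (g : Matrix (Fin 2) (Fin 2) k)).toLinearMap
        - (LinearMap.id : PtRing k n →ₗ[k] PtRing k n))) ⊓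
  weightedHomogeneousSubmodule k (fun p : Fin n × Fin 2 => Finsupp.single p.1 1)
    (Finsupp.equivFunOnFinite.symm v)

section LinearAlgebra

variable {R : Type*} [CommRing R] {K : Type*} [Field K]

/-- The three base points `(1,0)`, `(0,1)`, `(1,1)` of the projective line, as the rows of a
matrix. -/
def basePoints (R : Type*) [CommRing R] : Matrix (Fin 3) (Fin 2) R := !![1, 0; 0, 1; 1, 1]

/-- The determinant of rows `a` and `b` of a configuration `P` of vectors in the plane, that is,
the value at `P` of the bracket `[ab]`. -/
def rowDet {ι : Type*} (P : Matrix ι (Fin 2) R) (a b : ι) : R := P a 0 * P b 1 - P b 0 * P a 1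

lemma rowDet_basePoints_eq_zero_iff [Nontrivial R] (i j : Fin 3) :
    rowDet (basePoints R) i j = 0 ↔ i = j := by
  fin_cases i <;> fin_cases j <;> simp [rowDet, basePoints]

lemma exists_diagonal_mul_eq_basePoints_mul {P : Matrix (Fin 3) (Fin 2) K}
    (h₀₁ : rowDet P 0 1 ≠ 0) (h₀₂ : rowDet P 0 2 ≠ 0) (h₁₂ : rowDet P 1 2 ≠ 0) :
    ∃ (c : Fin 3 → K) (g : Matrix (Fin 2) (Fin 2) K),
      (∀ i, c i ≠ 0) ∧ g.det ≠ 0 ∧ Matrix.diagonal c * P = basePoints K * g := by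
  -- The coefficients come from Cramer's rule `[01] P₂ = -[12] P₀ + [02] P₁`.
  let c : Fin 3 → K := ![-rowDet P 1 2, rowDet P 0 2, rowDet P 0 1]
  let g : Matrix (Fin 2) (Fin 2) K := !![c 0 * P 0 0, c 0 * P 0 1; c 1 * P 1 0, c 1 * P 1 1]
  have hc : ∀ i, c i ≠ 0 := by simp [c, Fin.forall_fin_succ, h₀₁, h₀₂, h₁₂]
  have hdet : g.det = c 0 * c 1 * rowDet P 0 1 := by
    rw [Matrix.det_fin_two_of, rowDet]
    ring
  refine ⟨c, g, hc, hdet ▸ mul_ne_zero (mul_ne_zero (hc 0) (hc 1)) h₀₁, ?_⟩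
  ext i j
  rw [Matrix.diagonal_mul]
  fin_cases i <;> fin_cases j <;>
    simp [g, c, basePoints, Matrix.mul_apply, Fin.sum_univ_two, rowDet] <;> ring

lemma exists_submatrix_diagonal_mul_mul_eq_basePoints {ι : Type*} [Fintype ι] [DecidableEq ι]
    {P : Matrix ι (Fin 2) K} (e : Fin 3 ↪ ι) (h₀₁ : rowDet P (e 0) (e 1) ≠ 0)
    (h₀₂ : rowDet P (e 0) (e 2) ≠ 0) (h₁₂ : rowDet P (e 1) (e 2) ≠ 0) :
    ∃ (c : ι → K) (g : Matrix (Fin 2) (Fin 2) K), (∀ i, c i ≠ 0) ∧ g.det ≠ 0 ∧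
      (Matrix.diagonal c * P * g).submatrix e id = basePoints K := by
  obtain ⟨c, g, hc, hg, hcg⟩ :=
    exists_diagonal_mul_eq_basePoints_mul (P := P.submatrix e id) h₀₁ h₀₂ h₁₂
  refine ⟨Function.extend e c 1, g⁻¹, fun i => ?_, by simpa using hg, ?_⟩
  · by_cases hi : ∃ a, e a = i
    · obtain ⟨a, rfl⟩ := hi
      simpa [e.injective.extend_apply] using hc a
    · simp [Function.extend_apply' _ _ _ hi]
  · have hrows : (Matrix.diagonal (Function.extend e c 1) * P).submatrix e id
        = Matrix.diagonal c * P.submatrix e id := by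
      ext a j
      simp [Matrix.diagonal_mul, e.injective.extend_apply]
    calc (Matrix.diagonal (Function.extend e c 1) * P * g⁻¹).submatrix e id
        = (Matrix.diagonal (Function.extend e c 1) * P).submatrix e id * g⁻¹ := rfl
      _ = basePoints K * (g * g⁻¹) := by rw [hrows, hcg, Matrix.mul_assoc]
      _ = basePoints K := by rw [Matrix.mul_nonsing_inv _ hg.isUnit, Matrix.mul_one]

lemma isCoprime_of_ne_zero_or_ne_zero {a b : K} (h : a ≠ 0 ∨ b ≠ 0) : IsCoprime a b := by
  rcases h with ha | hb
  · exact ⟨a⁻¹, 0, by simp [ha]⟩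
  · exact ⟨0, b⁻¹, by simp [hb]⟩

lemma surjective_of_apply_eq_zero_iff_ne {ι V : Type*} [Finite ι] [AddCommGroup V] [Module K V]
    (φ : V →ₗ[K] ι → K) (w : ι → V) (h : ∀ i j, φ (w i) j = 0 ↔ j ≠ i) :
    Function.Surjective φ := by
  have := Fintype.ofFinite ι
  intro c
  refine ⟨∑ i, (c i * (φ (w i) i)⁻¹) • w i, ?_⟩
  ext j
  rw [map_sum, Finset.sum_apply, Fintype.sum_eq_single j]
  · have hj : φ (w j) j ≠ 0 := by simp [h]
    simp [hj]
  · intro i hi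
    simp [(h i j).2 hi.symm]

end LinearAlgebra

section Polynomials

lemma eq_of_forall_pow_eq_pow {K : Type*} [Field K] [Infinite K] {a b : ℕ}
    (h : ∀ c : K, c ≠ 0 → c ^ a = c ^ b) : a = b := by
  have hX : (Polynomial.X ^ (a + 1) : Polynomial K) = Polynomial.X ^ (b + 1) := by
    refine Polynomial.funext fun c => ?_
    rcases eq_or_ne c 0 with rfl | hc
    · simp
    · simp [pow_succ, h c hc]
  simpa using congrArg Polynomial.natDegree hX

lemma coeff_aeval_C_mul_X {R σ : Type*} [CommSemiring R] (c : σ → R) (f : MvPolynomial σ R)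
    (d : σ →₀ ℕ) :
    coeff d (aeval (fun s => C (c s) * X s : σ → MvPolynomial σ R) f)
      = (d.prod fun s m => c s ^ m) * coeff d f := by
  classical
  induction f using MvPolynomial.induction_on' with
  | monomial u a =>
    have hmonomial : aeval (fun s => C (c s) * X s : σ → MvPolynomial σ R) (monomial u a)
        = C (u.prod fun s m => c s ^ m) * monomial u a := by
      rw [aeval_monomial, monomial_eq]
      simp only [Finsupp.prod, mul_pow, Finset.prod_mul_distrib, map_prod, map_pow,
        MvPolynomial.algebraMap_eq]
      ring
    rw [hmonomial, coeff_C_mul, coeff_monomial]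
    split_ifs with h
    · rw [h]
    · simp
  | add p q hp hq => rw [map_add, coeff_add, coeff_add, hp, hq, mul_add]

end Polynomials

section Multihomogeneous

variable {k : Type} [CommRing k] {n : ℕ} {v w : Fin n → ℕ} {f g : PtRing k n}

/-- `f` is multihomogeneous of multidegree `v`: each of its monomials has degree `v i` in the pair
of variables `x_i, y_i`. -/
def IsMultihomogeneous (f : PtRing k n) (v : Fin n → ℕ) : Prop :=
  IsWeightedHomogeneous (fun p : Fin n × Fin 2 => Finsupp.single p.1 1) f
    (Finsupp.equivFunOnFinite.symm v)

lemma isMultihomogeneous_iff :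
    IsMultihomogeneous f v ↔ ∀ d ∈ f.support, ∀ i, d (i, 0) + d (i, 1) = v i := by
  simp [IsMultihomogeneous, IsWeightedHomogeneous, Finsupp.ext_iff, Finsupp.weight_apply,
    Finsupp.sum_fintype, Fintype.sum_prod_type, Finsupp.single_apply, Finset.sum_add_distrib]

lemma IsMultihomogeneous.mul (hf : IsMultihomogeneous f v) (hg : IsMultihomogeneous g w) :
    IsMultihomogeneous (f * g) (v + w) := by
  have hadd : Finsupp.equivFunOnFinite.symm (v + w)
      = Finsupp.equivFunOnFinite.symm v + Finsupp.equivFunOnFinite.symm w := by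
    ext
    simp
  rw [IsMultihomogeneous, hadd]
  exact IsWeightedHomogeneous.mul hf hg

lemma isMultihomogeneous_one : IsMultihomogeneous (1 : PtRing k n) 0 := by
  have hzero : Finsupp.equivFunOnFinite.symm (0 : Fin n → ℕ) = 0 := by
    ext
    simp
  rw [IsMultihomogeneous, hzero]
  exact isWeightedHomogeneous_one k _

lemma isMultihomogeneous_bracket (a b : Fin n) :
    IsMultihomogeneous (bracket k n a b) (Pi.single a 1 + Pi.single b 1) := by
  have hX (s : Fin n × Fin 2) : IsMultihomogeneous (X s : PtRing k n) (Pi.single s.1 1) := by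
    have hsingle : Finsupp.equivFunOnFinite.symm (Pi.single s.1 1 : Fin n → ℕ)
        = Finsupp.single s.1 1 := by
      simp
    rw [IsMultihomogeneous, hsingle]
    exact isWeightedHomogeneous_X k _ s
  have hba := (hX (b, 0)).mul (hX (a, 1))
  rw [add_comm] at hba
  exact IsWeightedHomogeneous.sub ((hX (a, 0)).mul (hX (b, 1))) hba

lemma isMultihomogeneous_graphMonomial (Γ : Multiset (Fin n × Fin n)) :
    IsMultihomogeneous (graphMonomial k n Γ) (valence n Γ) := by
  induction Γ using Multiset.induction with
  | empty =>
    have hzero : valence n 0 = 0 := by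
      ext
      simp [valence]
    rw [hzero, graphMonomial, Multiset.map_zero, Multiset.prod_zero]
    exact isMultihomogeneous_one
  | cons e Γ ih =>
    have hcons : valence n (e ::ₘ Γ) = Pi.single e.1 1 + Pi.single e.2 1 + valence n Γ := by
      ext i
      simp only [valence, Multiset.map_cons, Multiset.count_cons, Pi.add_apply, Pi.single_apply]
      ring
    rw [hcons, graphMonomial, Multiset.map_cons, Multiset.prod_cons]
    exact (isMultihomogeneous_bracket e.1 e.2).mul ih

end Multihomogeneous

section Evaluation

variable {k : Type} [CommRing k] {n : ℕ} {v : Fin n → ℕ} {f : PtRing k n}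

/-- Evaluation of polynomials at a configuration of `n` vectors, the rows of `P`. With this
convention the action of a matrix on polynomials becomes multiplication of `P` on the right. -/
noncomputable def evalAt (P : Matrix (Fin n) (Fin 2) k) : PtRing k n →ₐ[k] k :=
  aeval fun s => P s.1 s.2

lemma evalAt_eq_sum (P : Matrix (Fin n) (Fin 2) k) (f : PtRing k n) :
    evalAt P f = ∑ d ∈ f.support, coeff d f * ∏ i, P i 0 ^ d (i, 0) * P i 1 ^ d (i, 1) := by
  simp [evalAt, aeval_eq_eval, eval_eq', Fintype.prod_prod_type]

lemma evalAt_bracket (P : Matrix (Fin n) (Fin 2) k) (a b : Fin n) :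
    evalAt P (bracket k n a b) = rowDet P a b := by
  simp [evalAt, bracket, rowDet]

lemma evalAt_subst (g : Matrix (Fin 2) (Fin 2) k) (P : Matrix (Fin n) (Fin 2) k)
    (f : PtRing k n) : evalAt P (subst k n g f) = evalAt (P * g) f := by
  suffices h : (evalAt P).comp (subst k n g) = evalAt (P * g) from DFunLike.congr_fun h f
  refine algHom_ext fun ⟨i, j⟩ => ?_
  fin_cases j <;> simp [subst, evalAt, Matrix.mul_apply] <;> ring

lemma eq_zero_of_forall_evalAt_eq_zero [IsDomain k] [Infinite k] (h : ∀ P, evalAt P f = 0) :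
    f = 0 :=
  MvPolynomial.funext fun p => by
    simpa [evalAt, aeval_eq_eval] using h (Matrix.of fun i j => p (i, j))

lemma IsMultihomogeneous.evalAt_diagonal_mul (hf : IsMultihomogeneous f v) (c : Fin n → k)
    (P : Matrix (Fin n) (Fin 2) k) :
    evalAt (Matrix.diagonal c * P) f = (∏ i, c i ^ v i) * evalAt P f := by
  rw [evalAt_eq_sum, evalAt_eq_sum, Finset.mul_sum]
  refine Finset.sum_congr rfl fun d hd => ?_
  rw [mul_left_comm, ← Finset.prod_mul_distrib]
  congr 1
  refine Finset.prod_congr rfl fun i _ => ?_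
  rw [Matrix.diagonal_mul, Matrix.diagonal_mul, ← isMultihomogeneous_iff.1 hf d hd i]
  ring

-- The coefficients are the binary quadratic forms dual to evaluation at the base points.
lemma IsMultihomogeneous.evalAt_updateRow (hf : IsMultihomogeneous f v) {i : Fin n} (hi : v i = 2)
    (P : Matrix (Fin n) (Fin 2) k) (q : Fin 2 → k) :
    evalAt (P.updateRow i q) f
      = q 0 * (q 0 - q 1) * evalAt (P.updateRow i (basePoints k 0)) f
        + q 1 * (q 1 - q 0) * evalAt (P.updateRow i (basePoints k 1)) f
        + q 0 * q 1 * evalAt (P.updateRow i (basePoints k 2)) f := by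
  simp only [evalAt_eq_sum, Finset.mul_sum, ← Finset.sum_add_distrib]
  refine Finset.sum_congr rfl fun d hd => ?_
  have hprod (u : Fin 2 → k) :
      ∏ j, P.updateRow i u j 0 ^ d (j, 0) * P.updateRow i u j 1 ^ d (j, 1)
        = u 0 ^ d (i, 0) * u 1 ^ d (i, 1) * ∏ j ∈ {i}ᶜ, P j 0 ^ d (j, 0) * P j 1 ^ d (j, 1) := by
    rw [Fintype.prod_eq_mul_prod_compl i, Matrix.updateRow_self]
    congr 1
    refine Finset.prod_congr rfl fun j hj => ?_
    rw [Matrix.updateRow_ne (by simpa using hj)]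
  have hd₂ : d (i, 0) + d (i, 1) = 2 := (isMultihomogeneous_iff.1 hf d hd i).trans hi
  have hcases : d (i, 0) = 0 ∧ d (i, 1) = 2 ∨ d (i, 0) = 1 ∧ d (i, 1) = 1 ∨
      d (i, 0) = 2 ∧ d (i, 1) = 0 := by omega
  rcases hcases with ⟨h₀, h₁⟩ | ⟨h₀, h₁⟩ | ⟨h₀, h₁⟩ <;>
    simp [hprod, h₀, h₁, basePoints] <;> ring

lemma IsMultihomogeneous.evalAt_eq_zero_of_forall_basePoints (hf : IsMultihomogeneous f v)
    {S : Finset (Fin n)} (hS : ∀ i ∈ S, v i = 2) {P : Matrix (Fin n) (Fin 2) k}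
    (h : ∀ s : Fin n → Fin 3,
      evalAt (Matrix.of fun i => if i ∈ S then basePoints k (s i) else P i) f = 0) :
    evalAt P f = 0 := by
  induction S using Finset.induction generalizing P with
  | empty => exact h 0
  | insert a S ha ih =>
    have hrow (j : Fin 3) : evalAt (P.updateRow a (basePoints k j)) f = 0 := by
      refine ih (fun i hi => hS i (Finset.mem_insert_of_mem hi)) fun s => ?_
      convert h (Function.update s a j) using 3
      ext i
      rcases eq_or_ne i a with rfl | hia
      · simp [ha]
      · simp [hia]
    rw [← Matrix.updateRow_eq_self P a, hf.evalAt_updateRow (hS a (Finset.mem_insert_self a S))]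
    simp [hrow]

end Evaluation

section Invariants

variable {k : Type} {n : ℕ} {v : Fin n → ℕ}

lemma mem_Rv [CommRing k] {f : PtRing k n} : f ∈ Rv k n v ↔
    (∀ g : Matrix.SpecialLinearGroup (Fin 2) k, subst k n g f = f) ∧ IsMultihomogeneous f v := by
  simp [Rv, IsMultihomogeneous, sub_eq_zero]

lemma subst_bracket [CommRing k] (g : Matrix (Fin 2) (Fin 2) k) (a b : Fin n) :
    subst k n g (bracket k n a b) = C g.det * bracket k n a b := by
  simp only [subst, bracket, map_sub, map_mul, aeval_X, if_true, one_ne_zero, if_false,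
    Matrix.det_fin_two]
  ring

lemma graphMonomial_mem_Rv [CommRing k] (Γ : Multiset (Fin n × Fin n)) :
    graphMonomial k n Γ ∈ Rv k n (valence n Γ) := by
  refine mem_Rv.2 ⟨fun g => ?_, isMultihomogeneous_graphMonomial Γ⟩
  simp [graphMonomial, map_multiset_prod, subst_bracket]

lemma evalAt_mul_specialLinearGroup [CommRing k] {f : PtRing k n} (hf : f ∈ Rv k n v)
    (P : Matrix (Fin n) (Fin 2) k) (g : Matrix.SpecialLinearGroup (Fin 2) k) :
    evalAt (P * (g : Matrix (Fin 2) (Fin 2) k)) f = evalAt P f := by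
  rw [← evalAt_subst, (mem_Rv.1 hf).1 g]

variable [Field k] [Infinite k] {f : PtRing k n}

lemma sum_exponents_eq_of_mem_Rv (hf : f ∈ Rv k n v) {d : Fin n × Fin 2 →₀ ℕ}
    (hd : d ∈ f.support) : ∑ i, d (i, 0) = ∑ i, d (i, 1) := by
  refine eq_of_forall_pow_eq_pow (K := k) fun c hc => ?_
  have hsubst : subst k n !![c, 0; 0, c⁻¹] = aeval fun s => C (![c, c⁻¹] s.2) * X s := by
    refine algHom_ext fun ⟨i, j⟩ => ?_
    fin_cases j <;> simp [subst]
  have hinv : subst k n !![c, 0; 0, c⁻¹] f = f :=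
    (mem_Rv.1 hf).1 ⟨!![c, 0; 0, c⁻¹], by simp [hc]⟩
  have hweight : (d.prod fun s m => ![c, c⁻¹] s.2 ^ m) = 1 := by
    rw [← mul_eq_right₀ (mem_support_iff.1 hd), ← coeff_aeval_C_mul_X, ← hsubst, hinv]
  rw [← mul_inv_eq_one₀ (pow_ne_zero _ hc), ← hweight]
  simp [Finsupp.prod_fintype, Fintype.prod_prod_type, Finset.prod_mul_distrib,
    Finset.prod_pow_eq_pow_sum]

lemma two_mul_sum_exponents_of_mem_Rv (hf : f ∈ Rv k n v) {d : Fin n × Fin 2 →₀ ℕ}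
    (hd : d ∈ f.support) : 2 * ∑ i, d (i, 1) = ∑ i, v i := by
  calc 2 * ∑ i, d (i, 1) = ∑ i, d (i, 0) + ∑ i, d (i, 1) := by
        rw [sum_exponents_eq_of_mem_Rv hf hd, two_mul]
    _ = ∑ i, v i := by
        rw [← Finset.sum_add_distrib]
        exact Finset.sum_congr rfl fun i _ => isMultihomogeneous_iff.1 (mem_Rv.1 hf).2 d hd i

lemma Rv_eq_bot_of_odd_sum (hv : Odd (∑ i, v i)) : Rv k n v = ⊥ := by
  refine (Submodule.eq_bot_iff _).2 fun f hf => ?_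
  rw [← support_eq_empty, Finset.eq_empty_iff_forall_notMem]
  intro d hd
  rw [← two_mul_sum_exponents_of_mem_Rv hf hd] at hv
  exact Nat.not_odd_iff_even.2 (even_two_mul _) hv

-- The division truncates when `∑ i, v i` is odd, but then `f = 0`.
lemma evalAt_mul_diagonal (hf : f ∈ Rv k n v) (P : Matrix (Fin n) (Fin 2) k) (t : k) :
    evalAt (P * Matrix.diagonal ![1, t]) f = t ^ ((∑ i, v i) / 2) * evalAt P f := by
  rw [evalAt_eq_sum, evalAt_eq_sum, Finset.mul_sum]
  refine Finset.sum_congr rfl fun d hd => ?_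
  have hdeg : (∑ i, v i) / 2 = ∑ i, d (i, 1) := by
    have := two_mul_sum_exponents_of_mem_Rv hf hd
    omega
  rw [hdeg, ← Finset.prod_pow_eq_pow_sum, mul_left_comm, ← Finset.prod_mul_distrib]
  congr 1
  refine Finset.prod_congr rfl fun i _ => ?_
  simp only [Matrix.mul_diagonal, Matrix.cons_val_zero, Matrix.cons_val_one, mul_one]
  ring

lemma evalAt_mul (hf : f ∈ Rv k n v) (P : Matrix (Fin n) (Fin 2) k)
    {g : Matrix (Fin 2) (Fin 2) k} (hg : g.det ≠ 0) :
    evalAt (P * g) f = g.det ^ ((∑ i, v i) / 2) * evalAt P f := by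
  let h : Matrix.SpecialLinearGroup (Fin 2) k :=
    ⟨Matrix.diagonal ![1, g.det⁻¹] * g, by simp [Fin.prod_univ_two, hg]⟩
  have hfactor : Matrix.diagonal ![1, g.det] * (h : Matrix (Fin 2) (Fin 2) k) = g := by
    ext i j
    fin_cases i <;> simp [h, hg]
  calc evalAt (P * g) f
      = evalAt (P * Matrix.diagonal ![1, g.det] * (h : Matrix (Fin 2) (Fin 2) k)) f := by
        rw [Matrix.mul_assoc, hfactor]
    _ = g.det ^ ((∑ i, v i) / 2) * evalAt P f := by
        rw [evalAt_mul_specialLinearGroup hf, evalAt_mul_diagonal hf]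

lemma evalAt_eq_zero_of_unstable_of_apply_one_eq_zero (hf : f ∈ Rv k n v)
    {P : Matrix (Fin n) (Fin 2) k} {T : Finset (Fin n)} (hT : ∀ i ∈ T, P i 1 = 0)
    (hv : ∑ i, v i < 2 * ∑ i ∈ T, v i) : evalAt P f = 0 := by
  rw [evalAt_eq_sum]
  refine Finset.sum_eq_zero fun d hd => ?_
  obtain ⟨i, hi, hdi⟩ : ∃ i ∈ T, d (i, 1) ≠ 0 := by
    by_contra! hd₀
    have hle : ∑ i, d (i, 1) ≤ ∑ i ∈ Tᶜ, v i := by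
      rw [← Finset.sum_compl_add_sum T, Finset.sum_eq_zero hd₀, add_zero]
      exact Finset.sum_le_sum fun i _ =>
        isMultihomogeneous_iff.1 (mem_Rv.1 hf).2 d hd i ▸ Nat.le_add_left _ _
    have hsum := two_mul_sum_exponents_of_mem_Rv hf hd
    have hsplit := Finset.sum_compl_add_sum T v
    omega
  refine mul_eq_zero_of_right _ (Finset.prod_eq_zero (Finset.mem_univ i) ?_)
  rw [hT i hi, zero_pow hdi, mul_zero]

lemma evalAt_eq_zero_of_unstable (hf : f ∈ Rv k n v) {P : Matrix (Fin n) (Fin 2) k}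
    {T : Finset (Fin n)} {u : Fin 2 → k} (hu : u ≠ 0) (hT : ∀ i ∈ T, ∃ c : k, P i = c • u)
    (hv : ∑ i, v i < 2 * ∑ i ∈ T, v i) : evalAt P f = 0 := by
  have hcoprime : IsCoprime (-u 1) (u 0) := by
    refine isCoprime_of_ne_zero_or_ne_zero ?_
    contrapose! hu
    exact funext (Fin.forall_fin_two.2 ⟨hu.2, neg_eq_zero.1 hu.1⟩)
  obtain ⟨g, hg₀, hg₁⟩ := hcoprime.exists_SL2_col 1
  rw [← evalAt_mul_specialLinearGroup hf P g]
  refine evalAt_eq_zero_of_unstable_of_apply_one_eq_zero hf (fun i hi => ?_) hv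
  obtain ⟨c, hc⟩ := hT i hi
  rw [Matrix.mul_apply, Fin.sum_univ_two, hg₀, hg₁, hc, Pi.smul_apply, Pi.smul_apply, smul_eq_mul,
    smul_eq_mul]
  ring

end Invariants

section Colourings

variable {k : Type} {n : ℕ} {v : Fin n → ℕ}

lemma evalAt_submatrix_basePoints_graphMonomial_eq_zero_iff [CommRing k] [IsDomain k]
    (Γ : Multiset (Fin n × Fin n)) (s : Fin n → Fin 3) :
    evalAt ((basePoints k).submatrix s id) (graphMonomial k n Γ) = 0
      ↔ ∃ e ∈ Γ, s e.1 = s e.2 := by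
  have hbracket (a b : Fin n) : evalAt ((basePoints k).submatrix s id) (bracket k n a b) = 0
      ↔ s a = s b := by
    rw [evalAt_bracket, ← rowDet_basePoints_eq_zero_iff (R := k)]
    rfl
  simp [graphMonomial, map_multiset_prod, Multiset.prod_eq_zero_iff, hbracket]

variable [Field k] [Infinite k] {f : PtRing k n}

lemma eq_zero_of_forall_submatrix_eq_basePoints (hf : f ∈ Rv k n v) (e : Fin 3 ↪ Fin n)
    (h : ∀ P : Matrix (Fin n) (Fin 2) k, P.submatrix e id = basePoints k → evalAt P f = 0) :
    f = 0 := by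
  let Γ : Multiset (Fin n × Fin n) := {(e 0, e 1), (e 0, e 2), (e 1, e 2)}
  have hΓ : graphMonomial k n Γ ≠ 0 := by
    intro hzero
    have hproper := (evalAt_submatrix_basePoints_graphMonomial_eq_zero_iff Γ
      (Function.invFun e)).1 (hzero ▸ map_zero (evalAt (k := k) _))
    simp [Γ, Function.leftInverse_invFun e.injective _] at hproper
  refine (mul_eq_zero.1 (?_ : f * graphMonomial k n Γ = 0)).resolve_right hΓ
  refine eq_zero_of_forall_evalAt_eq_zero fun P => ?_
  rw [map_mul, mul_eq_zero, or_iff_not_imp_right]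
  intro hP
  obtain ⟨⟨h₀₁, h₀₂⟩, h₁₂⟩ : (rowDet P (e 0) (e 1) ≠ 0 ∧ rowDet P (e 0) (e 2) ≠ 0) ∧
      rowDet P (e 1) (e 2) ≠ 0 := by
    simpa [Γ, graphMonomial, evalAt_bracket, and_assoc] using hP
  obtain ⟨c, g, hc, hg, hnormal⟩ :=
    exists_submatrix_diagonal_mul_mul_eq_basePoints e h₀₁ h₀₂ h₁₂
  have hzero := h _ hnormal
  rw [evalAt_mul hf _ hg, (mem_Rv.1 hf).2.evalAt_diagonal_mul] at hzero
  simpa [hg, hc, Finset.prod_eq_zero_iff] using hzero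

lemma eq_zero_of_forall_evalAt_submatrix_basePoints (hf : f ∈ Rv k n v) (e : Fin 3 ↪ Fin n)
    (hv : ∀ i ∉ Set.range e, v i = 2)
    (h : ∀ s : Fin n → Fin 3, s ∘ e = id → evalAt ((basePoints k).submatrix s id) f = 0) :
    f = 0 := by
  classical
  refine eq_zero_of_forall_submatrix_eq_basePoints hf e fun P hP => ?_
  refine (mem_Rv.1 hf).2.evalAt_eq_zero_of_forall_basePoints (S := {i | i ∉ Set.range e})
    (by simpa using hv) fun s => ?_
  let s' : Fin n → Fin 3 := fun i => if i ∈ Set.range e then Function.invFun e i else s i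
  have hs' (a : Fin 3) : s' (e a) = a := by
    simp [s', Function.leftInverse_invFun e.injective a]
  convert h s' (funext hs') using 3
  ext i j
  by_cases hi : i ∈ Set.range e
  · obtain ⟨a, rfl⟩ := hi
    simpa [hs'] using congrFun₂ hP a j
  · simp_all [s']

lemma evalAt_submatrix_basePoints_eq_zero_of_unstable (hf : f ∈ Rv k n v) (s : Fin n → Fin 3)
    {j : Fin 3} (hv : ∑ i, v i < 2 * ∑ i with s i = j, v i) :
    evalAt ((basePoints k).submatrix s id) f = 0 := by
  have hj : basePoints k j ≠ 0 := by
    intro hzero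
    have h₀ := congrFun hzero 0
    have h₁ := congrFun hzero 1
    fin_cases j <;> simp [basePoints] at h₀ h₁
  refine evalAt_eq_zero_of_unstable hf hj (fun i hi => ⟨1, ?_⟩) hv
  rw [one_smul, ← (Finset.mem_filter.1 hi).2]
  rfl

end Colourings

section FivePoints

/-- The colouring of five points in which the first three have the distinct colours `0`, `1`, `2`
and the last two have the distinct colours `σ 0` and `σ 1`. Permutations encode the ordered pairs of
distinct colours. -/
def pairColouring (σ : Equiv.Perm (Fin 3)) : Fin 5 → Fin 3 := ![0, 1, 2, σ 0, σ 1]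

/-- The pentagon `3 – σ 1 – σ 0 – 4 – σ 2 – 3`, for which `pairColouring σ` is a proper
colouring. -/
def pentagon (σ : Equiv.Perm (Fin 3)) : Multiset (Fin 5 × Fin 5) :=
  let p : Fin 3 → Fin 5 := Fin.castLE (by decide) ∘ σ
  {(3, p 1), (p 1, p 0), (p 0, 4), (4, p 2), (p 2, 3)}

lemma valence_pentagon (σ : Equiv.Perm (Fin 3)) : valence 5 (pentagon σ) = fun _ => 2 := by
  revert σ
  decide

lemma exists_monochromatic_edge_pentagon_iff (σ τ : Equiv.Perm (Fin 3)) :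
    (∃ e ∈ pentagon σ, pairColouring τ e.1 = pairColouring τ e.2) ↔ τ ≠ σ := by
  revert σ τ
  decide

/-- Evaluation of invariants at the six configurations of base points given by the colourings
`pairColouring σ`. -/
noncomputable def evalPairColourings (k : Type) [Field k] :
    ↥(Rv k 5 fun _ => 2) →ₗ[k] (Equiv.Perm (Fin 3) → k) :=
  LinearMap.pi fun σ =>
    (evalAt ((basePoints k).submatrix (pairColouring σ) id)).toLinearMap ∘ₗ Submodule.subtype _

variable {k : Type} [Field k]

lemma evalPairColourings_surjective : Function.Surjective (evalPairColourings k) := by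
  have hmem (σ : Equiv.Perm (Fin 3)) : graphMonomial k 5 (pentagon σ) ∈ Rv k 5 fun _ => 2 :=
    valence_pentagon σ ▸ graphMonomial_mem_Rv (pentagon σ)
  refine surjective_of_apply_eq_zero_iff_ne _ (fun σ => ⟨_, hmem σ⟩) fun σ τ => ?_
  exact (evalAt_submatrix_basePoints_graphMonomial_eq_zero_iff _ _).trans
    (exists_monochromatic_edge_pentagon_iff σ τ)

lemma exists_eq_pairColouring_or_exists_sum_lt {s : Fin 5 → Fin 3}
    (hs : s ∘ Fin.castLEEmb (by decide) = id) :
    (∃ σ, s = pairColouring σ) ∨ ∃ j, ∑ _i : Fin 5, 2 < 2 * ∑ i with s i = j, 2 := by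
  have hs_eq : s = ![0, 1, 2, s 3, s 4] := by
    ext i
    fin_cases i
    exacts [congrArg _ (congrFun hs 0), congrArg _ (congrFun hs 1), congrArg _ (congrFun hs 2),
      rfl, rfl]
  rw [hs_eq]
  generalize s 3 = i, s 4 = j
  revert i j
  decide

lemma evalPairColourings_injective [Infinite k] : Function.Injective (evalPairColourings k) := by
  refine (injective_iff_map_eq_zero _).2 fun ⟨f, hf⟩ h => Subtype.ext ?_
  refine eq_zero_of_forall_evalAt_submatrix_basePoints hf (Fin.castLEEmb (by decide))
    (fun _ _ => rfl) fun s hs => ?_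
  obtain ⟨σ, rfl⟩ | ⟨j, hj⟩ := exists_eq_pairColouring_or_exists_sum_lt hs
  · exact congrFun h σ
  · exact evalAt_submatrix_basePoints_eq_zero_of_unstable hf s hj

lemma finrank_Rv_five_two [Infinite k] : Module.finrank k ↥(Rv k 5 fun _ => 2) = 6 := by
  rw [(LinearEquiv.ofBijective (evalPairColourings k)
    ⟨evalPairColourings_injective, evalPairColourings_surjective⟩).finrank_eq,
    Module.finrank_fintype_fun_eq_card, Fintype.card_perm, Fintype.card_fin]
  rfl

end FivePoints

theorem stmt12_general (k : Type) [Field k] [Infinite k] :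
    Rv k 5 (fun _ => 1) = ⊥ ∧ Module.finrank k ↥(Rv k 5 fun _ => 2) = 6 :=
  ⟨Rv_eq_bot_of_odd_sum (by decide), finrank_Rv_five_two⟩

/-- For five points, there are no invariants of multidegree `(1,1,1,1,1)`, while the space of
invariants of multidegree `(2,2,2,2,2)` has dimension 6. -/
theorem stmt12 (k : Type) [Field k] [CharZero k] :
    Rv k 5 (fun _ => 1) = ⊥ ∧ Module.finrank k ↥(Rv k 5 fun _ => 2) = 6 :=
  stmt12_general k
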